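/- arXiv:2203.00944 — 7 statements merged into one kernel-verified Lean document; each statement's English description precedes it below -/
import Mathlib

section
/- Let d, s be positive integers, Q ∈ ℝ^{d×d} a symmetric matrix, and f : ℝ^d → ℝ^d a map satisfying ⟨Q x, f(x)⟩ = 0 for all x ∈ ℝ^d (so that V(y) = (1/2)⟨y, Qy⟩ is an invariant of ẏ = f(y)). Let (a_{ij}) ∈ ℝ^{s×s} and (b_i) ∈ ℝ^s be Runge–Kutta coefficients satisfying the canonical condition b_i a_{ij} + b_j a_{ji} = b_i b_j for all i, j ∈ {1,…,s}. Suppose h ∈ ℝ, y₀ ∈ ℝ^d, and Y₁,…,Y_s ∈ ℝ^d satisfy Y_i = y₀ + h Σ_{j=1}^s a_{ij} f(Y_j) for every i, and set y₁ = y₀ + h Σ_{i=1}^s b_i f(Y_i). Then ⟨y₁, Q y₁⟩ = ⟨y₀, Q y₀⟩. -/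
open scoped RealInnerProductSpace
open Set MeasureTheory intervalIntegral Filter

/-- Action of a matrix on a vector of the Euclidean space `ℝ^d`. -/
noncomputable def matVec {d : ℕ} (M : Matrix (Fin d) (Fin d) ℝ)
    (x : EuclideanSpace ℝ (Fin d)) : EuclideanSpace ℝ (Fin d) :=
  Matrix.toEuclideanLin M x

/-- The spectral norm `‖M‖₂` of a matrix: the operator norm induced by the Euclidean norm. -/
noncomputable def matNorm2 {d : ℕ} (M : Matrix (Fin d) (Fin d) ℝ) : ℝ :=
  ‖LinearMap.toContinuousLinearMap (Matrix.toEuclideanLin M)‖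

/-- The maximum absolute row-sum norm `‖A‖_∞` of a matrix. -/
noncomputable def rowSumNorm {s : ℕ} (A : Matrix (Fin s) (Fin s) ℝ) : ℝ :=
  ⨆ i, ∑ j, abs (A i j)

/-- Only the symmetric part of `b i * a i j` is seen by a symmetric array `m`, and the canonical
condition says that this symmetric part is `b i * b j / 2`. -/
theorem sum_canonical_symmetrize {s : ℕ} (a : Fin s → Fin s → ℝ) (b : Fin s → ℝ)
    (hcanon : ∀ i j, b i * a i j + b j * a j i = b i * b j)
    (m : Fin s → Fin s → ℝ) (hm : ∀ i j, m i j = m j i) :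
    ∑ i, ∑ j, b i * b j * m i j = 2 * ∑ i, ∑ j, b i * a i j * m i j := by
  have hswap : ∑ i, ∑ j, b j * a j i * m i j = ∑ i, ∑ j, b i * a i j * m i j := by
    rw [Finset.sum_comm]
    simp only [hm]
  calc ∑ i, ∑ j, b i * b j * m i j
      = ∑ i, ∑ j, b i * a i j * m i j + ∑ i, ∑ j, b j * a j i * m i j := by
        simp only [← hcanon, add_mul, Finset.sum_add_distrib]
    _ = 2 * ∑ i, ∑ j, b i * a i j * m i j := by rw [hswap, two_mul]

theorem inner_matVec_comm {d : ℕ} {Q : Matrix (Fin d) (Fin d) ℝ} (hQ : Q.IsSymm)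
    (x y : EuclideanSpace ℝ (Fin d)) : ⟪x, matVec Q y⟫ = ⟪y, matVec Q x⟫ := by
  have hH : Q.IsHermitian := by
    rw [Matrix.IsHermitian, Matrix.conjTranspose_eq_transpose_of_trivial]
    exact hQ
  have hsym := Matrix.isSymmetric_toEuclideanLin_iff.mpr hH
  rw [real_inner_comm]
  exact hsym y x

/-- Canonical Runge--Kutta methods (Cooper): if `b_i a_{ij} + b_j a_{ji} = b_i b_j` for all
`i, j`, and `V(y) = (1/2)⟨y, Q y⟩` is an invariant of `ẏ = f(y)` (i.e. `⟨Q x, f x⟩ = 0` for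
all `x`), then the Runge--Kutta update preserves `⟨y, Q y⟩`. -/
theorem canonicalRK_preserves_quadratic_invariant
    (d s : ℕ) (hd : 0 < d) (hs : 0 < s)
    (Q : Matrix (Fin d) (Fin d) ℝ) (hQ : Q.IsSymm)
    (f : EuclideanSpace ℝ (Fin d) → EuclideanSpace ℝ (Fin d))
    (hf : ∀ x, ⟪matVec Q x, f x⟫ = 0)
    (a : Fin s → Fin s → ℝ) (b : Fin s → ℝ)
    (hcanon : ∀ i j, b i * a i j + b j * a j i = b i * b j)
    (h : ℝ) (y₀ : EuclideanSpace ℝ (Fin d))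
    (Y : Fin s → EuclideanSpace ℝ (Fin d))
    (hY : ∀ i, Y i = y₀ + h • ∑ j, a i j • f (Y j))
    (y₁ : EuclideanSpace ℝ (Fin d))
    (hy₁ : y₁ = y₀ + h • ∑ i, b i • f (Y i)) :
    ⟪y₁, matVec Q y₁⟫ = ⟪y₀, matVec Q y₀⟫ := by
  have hsymm := inner_matVec_comm hQ
  let k : Fin s → EuclideanSpace ℝ (Fin d) := fun i => f (Y i)
  have hYk : ∀ i, Y i = y₀ + h • ∑ j, a i j • k j := hY
  have hadd : ∀ x y, matVec Q (x + y) = matVec Q x + matVec Q y := fun x y => map_add _ x y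
  have hsmul : ∀ (c : ℝ) x, matVec Q (c • x) = c • matVec Q x := fun c x => map_smul _ c x
  have hsum : ∀ g : Fin s → EuclideanSpace ℝ (Fin d),
      matVec Q (∑ i, g i) = ∑ i, matVec Q (g i) := fun g => map_sum _ g _
  have hstage : ∀ i, ⟪y₀, matVec Q (k i)⟫ = -h * ∑ j, a i j * ⟪k i, matVec Q (k j)⟫ := by
    intro i
    have h0 : ⟪k i, matVec Q (Y i)⟫ = 0 := by rw [real_inner_comm]; exact hf (Y i)
    rw [hYk i, hadd, hsmul, hsum, inner_add_right, inner_smul_right, inner_sum, hsymm] at h0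
    simp only [hsmul, inner_smul_right] at h0
    linarith
  have hlin : ⟪y₀, matVec Q (∑ i, b i • k i)⟫
      = -h * ∑ i, ∑ j, b i * a i j * ⟪k i, matVec Q (k j)⟫ := by
    simp only [hsum, hsmul, inner_sum, inner_smul_right, hstage, Finset.mul_sum]
    exact Finset.sum_congr rfl fun i _ => Finset.sum_congr rfl fun j _ => by ring
  have hquad : ⟪∑ i, b i • k i, matVec Q (∑ i, b i • k i)⟫
      = ∑ i, ∑ j, b i * b j * ⟪k i, matVec Q (k j)⟫ := by
    simp only [hsum, hsmul, inner_sum, sum_inner, real_inner_smul_left, inner_smul_right,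
      Finset.mul_sum]
    rw [Finset.sum_comm]
    exact Finset.sum_congr rfl fun i _ => Finset.sum_congr rfl fun j _ => by ring
  rw [sum_canonical_symmetrize a b hcanon _ fun i j => hsymm (k i) (k j)] at hquad
  have hy : y₁ = y₀ + h • ∑ i, b i • k i := hy₁
  rw [hy, hadd, hsmul, inner_add_left, inner_add_right, inner_add_right, real_inner_smul_left,
    real_inner_smul_left, inner_smul_right, inner_smul_right,
    hsymm (∑ i, b i • k i) y₀, hquad, hlin]
  ring
end

section
/- Let d, s be positive integers, Q ∈ ℝ^{d×d} a symmetric matrix, and S : ℝ^d → ℝ^{d×d} a map such that S(x) is skew-symmetric for every x ∈ ℝ^d. Let (a_{ij}) ∈ ℝ^{s×s} and (b_i) ∈ ℝ^s satisfy the canonical condition b_i a_{ij} + b_j a_{ji} = b_i b_j for all i, j ∈ {1,…,s}. Let h > 0, y₀ ∈ ℝ^d, let Ŷ₁,…,Ŷ_s ∈ ℝ^d be arbitrary vectors, and suppose Y₁,…,Y_s ∈ ℝ^d satisfy Y_i = y₀ + h Σ_{j=1}^s a_{ij} S(Ŷ_j) Q Y_j for every i. Set y₁ = y₀ + h Σ_{i=1}^s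 b_i S(Ŷ_i) Q Y_i. Then ⟨y₁, Q y₁⟩ = ⟨y₀, Q y₀⟩, i.e. the scheme preserves the quadratic invariant V(y) = (1/2)⟨y, Qy⟩ for any step size h. -/
/-!
Write `k i = S(Ŷ i) Q (Y i)` and `B x y = ⟪x, Q y⟫`, a symmetric bilinear form. Skew-symmetry of
`S(Ŷ i)` gives `B (k i) (Y i) = 0` whatever the predictor `Ŷ i` is; this is all that is needed of
the stages. Substituting the stage equation turns it into
`B (k i) y₀ = -h ∑ j, a i j * B (k i) (k j)`. Expanding the update then gives
`B y₁ y₁ - B y₀ y₀ = h² ∑ i, ∑ j, (b i * b j - b i * a i j - b j * a j i) * B (k i) (k j)`,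
after symmetrising the double sum, and every coefficient vanishes for a canonical tableau.
-/

open scoped RealInnerProductSpace
open Set MeasureTheory intervalIntegral Filter Matrix

/-- Moving a matrix across the Euclidean inner product transposes it. -/
lemma inner_matVec_right {d : ℕ} (M : Matrix (Fin d) (Fin d) ℝ)
    (x y : EuclideanSpace ℝ (Fin d)) :
    ⟪x, matVec M y⟫ = ⟪matVec Mᵀ x, y⟫ := by
  have hM := Matrix.toEuclideanLin_conjTranspose_eq_adjoint M
  rw [Matrix.conjTranspose_eq_transpose_of_trivial] at hM
  rw [matVec, matVec, hM, LinearMap.adjoint_inner_left]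

lemma inner_matVec_self_of_skew {d : ℕ} (M : Matrix (Fin d) (Fin d) ℝ) (hM : Mᵀ = -M)
    (x : EuclideanSpace ℝ (Fin d)) : ⟪matVec M x, x⟫ = 0 := by
  have h1 := inner_matVec_right M x x
  have h2 : matVec (-M) x = -matVec M x := by simp [matVec]
  rw [hM, h2, inner_neg_left, real_inner_comm] at h1
  linarith

/-- Canonical Runge–Kutta tableaux conserve a symmetric quadratic form `⟪y, T y⟫` as soon as each
stage derivative `k i` is `T`-orthogonal to its stage `y₀ + h ∑ j, a i j k j`. -/
lemma canonical_tableau_preserves {E ι : Type*} [NormedAddCommGroup E] [InnerProductSpace ℝ E]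
    [Fintype ι] (T : E →ₗ[ℝ] E) (hT : ∀ x y, ⟪x, T y⟫ = ⟪y, T x⟫)
    (a : ι → ι → ℝ) (b : ι → ℝ) (hcanon : ∀ i j, b i * a i j + b j * a j i = b i * b j)
    (h : ℝ) (y₀ : E) (k : ι → E)
    (hk : ∀ i, ⟪k i, T (y₀ + h • ∑ j, a i j • k j)⟫ = 0) :
    ⟪y₀ + h • ∑ i, b i • k i, T (y₀ + h • ∑ i, b i • k i)⟫ = ⟪y₀, T y₀⟫ := by
  have hk' : ∀ i, ⟪k i, T y₀⟫ = -(h * ∑ j, a i j * ⟪k i, T (k j)⟫) := by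
    intro i
    have := hk i
    simp only [map_add, map_smul, map_sum, inner_add_right, inner_smul_right, inner_sum] at this
    linarith
  have hlin : ⟪∑ i, b i • k i, T y₀⟫ = -(h * ∑ i, ∑ j, b i * a i j * ⟪k i, T (k j)⟫) := by
    simp only [sum_inner, real_inner_smul_left, hk', Finset.mul_sum, ← Finset.sum_neg_distrib]
    exact Finset.sum_congr rfl fun i _ => Finset.sum_congr rfl fun j _ => by ring
  have hquad : ⟪∑ i, b i • k i, T (∑ i, b i • k i)⟫
      = ∑ i, ∑ j, b i * b j * ⟪k i, T (k j)⟫ := by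
    simp only [sum_inner, real_inner_smul_left, map_sum, map_smul, inner_sum, inner_smul_right,
      Finset.mul_sum]
    rw [Finset.sum_comm]
    exact Finset.sum_congr rfl fun i _ => Finset.sum_congr rfl fun j _ => by ring
  have hswap : ∑ i, ∑ j, b i * a i j * ⟪k i, T (k j)⟫
      = ∑ i, ∑ j, b j * a j i * ⟪k i, T (k j)⟫ := by
    rw [Finset.sum_comm]
    exact Finset.sum_congr rfl fun i _ => Finset.sum_congr rfl fun j _ => by rw [hT]
  have hdouble : ∑ i, ∑ j, b i * b j * ⟪k i, T (k j)⟫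
      = 2 * ∑ i, ∑ j, b i * a i j * ⟪k i, T (k j)⟫ := by
    rw [two_mul]
    nth_rewrite 2 [hswap]
    simp only [← hcanon, add_mul, Finset.sum_add_distrib]
  simp only [map_add, map_smul, inner_add_left, inner_add_right, real_inner_smul_left,
    inner_smul_right]
  rw [hT y₀ (∑ i, b i • k i), hlin, hquad, hdouble]
  ring

/-- The linearly implicit scheme `Y_i = y₀ + h Σ_j a_{ij} S(Ŷ_j) Q Y_j`,
`y₁ = y₀ + h Σ_i b_i S(Ŷ_i) Q Y_i` with a canonical tableau `(A, b)` preserves the quadratic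
invariant `V(y) = (1/2)⟨y, Q y⟩` for any step size `h > 0` and arbitrary predictors `Ŷ_i`. -/
theorem linearly_implicit_scheme_preserves_quadratic_invariant
    (d s : ℕ) (hd : 0 < d) (hs : 0 < s)
    (Q : Matrix (Fin d) (Fin d) ℝ) (hQ : Q.IsSymm)
    (S : EuclideanSpace ℝ (Fin d) → Matrix (Fin d) (Fin d) ℝ)
    (hS : ∀ x, (S x)ᵀ = -(S x))
    (a : Fin s → Fin s → ℝ) (b : Fin s → ℝ)
    (hcanon : ∀ i j, b i * a i j + b j * a j i = b i * b j)
    (h : ℝ) (hh : 0 < h) (y₀ : EuclideanSpace ℝ (Fin d))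
    (Yhat Y : Fin s → EuclideanSpace ℝ (Fin d))
    (hY : ∀ i, Y i = y₀ + h • ∑ j, a i j • matVec (S (Yhat j)) (matVec Q (Y j)))
    (y₁ : EuclideanSpace ℝ (Fin d))
    (hy₁ : y₁ = y₀ + h • ∑ i, b i • matVec (S (Yhat i)) (matVec Q (Y i))) :
    ⟪y₁, matVec Q y₁⟫ = ⟪y₀, matVec Q y₀⟫ := by
  subst hy₁
  refine canonical_tableau_preserves (Matrix.toEuclideanLin Q) (fun x y => ?_) a b hcanon h y₀
    (fun i => matVec (S (Yhat i)) (matVec Q (Y i))) (fun i => ?_)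
  · have hxy := inner_matVec_right Q x y
    rw [hQ.eq] at hxy
    exact hxy.trans (real_inner_comm _ _)
  · rw [← hY i]
    exact inner_matVec_self_of_skew _ (hS _) (matVec Q (Y i))
end

section
/- Let d, s be positive integers, Q ∈ ℝ^{d×d} symmetric, A = (a_{ij}) ∈ ℝ^{s×s}, and S : ℝ^d → ℝ^{d×d} Lipschitz continuous with constant L_S, i.e. ‖S(y) − S(z)‖₂ ≤ L_S ‖y − z‖ for all y, z. Let h > 0, y₀ ∈ ℝ^d, let Y₁,…,Y_s satisfy Y_i = y₀ + h Σ_j a_{ij} S(Y_j) Q Y_j, and let Y_i^{(k)} and Y_i^{(k+1)} (i ∈ {1,…,s}) satisfy Y_i^{(k+1)} = y₀ + h Σ_j a_{ij} S(Y_j^{(k)}) Q Y_j^{(k+1)}. Set C = max_i ‖Y_i‖ and M^{(k)} = max_i ‖S(Y_i^{(k)})‖₂. If h ‖A‖_∞ ‖Q‖₂ M^{(k)} < 1, then max_i ‖Y_i^{(k+1)} − Y_i‖ ≤ (h ‖A‖_∞ ‖Q‖₂ L_S C) / (1 − h ‖A‖_∞ ‖Q‖₂ M^{(k)}) · max_i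 ‖Y_i^{(k)} − Y_i‖. -/
/-!
Subtracting the two stage equations and adding and subtracting `S(Y_j^{(k)}) Q Y_j` gives
`Y_i^{(k+1)} - Y_i = h ∑_j a_{ij} (S(Y_j^{(k)}) Q (Y_j^{(k+1)} - Y_j) + (S(Y_j^{(k)}) - S(Y_j)) Q Y_j)`.
With `D` and `E` the maximal errors after and before the step, each bracket has norm at most
`B = M ‖Q‖₂ D + L_S E ‖Q‖₂ C`, so that `D ≤ h ‖A‖_∞ B`. Since `h ‖A‖_∞ ‖Q‖₂ M < 1`, the `D`-term on
the right can be absorbed into the left-hand side.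
-/

open scoped RealInnerProductSpace
open Set MeasureTheory intervalIntegral Filter

lemma norm_matVec_le {d : ℕ} (M : Matrix (Fin d) (Fin d) ℝ) (x : EuclideanSpace ℝ (Fin d)) :
    ‖matVec M x‖ ≤ matNorm2 M * ‖x‖ :=
  (LinearMap.toContinuousLinearMap (Matrix.toEuclideanLin M)).le_opNorm x

lemma matNorm2_nonneg {d : ℕ} (M : Matrix (Fin d) (Fin d) ℝ) : 0 ≤ matNorm2 M :=
  norm_nonneg _

/-- Separates the new error `u - v` from the error `S₁ - S₂` of the lagged coefficient. -/
lemma matVec_comp_sub {d : ℕ} (S₁ S₂ Q : Matrix (Fin d) (Fin d) ℝ)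
    (u v : EuclideanSpace ℝ (Fin d)) :
    matVec S₁ (matVec Q u) - matVec S₂ (matVec Q v) =
      matVec S₁ (matVec Q (u - v)) + matVec (S₁ - S₂) (matVec Q v) := by
  simp only [matVec, map_sub, LinearMap.sub_apply]
  abel

lemma sum_abs_le_rowSumNorm {s : ℕ} (A : Matrix (Fin s) (Fin s) ℝ) (i : Fin s) :
    ∑ j, |A i j| ≤ rowSumNorm A :=
  le_ciSup (f := fun i => ∑ j, |A i j|) (Set.finite_range _).bddAbove i

/-- Nonnegativity of the Lipschitz constant follows from `0 < d`: compare a unit vector with `0`. -/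
lemma lipschitz_const_nonneg {d : ℕ} (hd : 0 < d)
    {S : EuclideanSpace ℝ (Fin d) → Matrix (Fin d) (Fin d) ℝ} {LS : ℝ}
    (hLip : ∀ x y : EuclideanSpace ℝ (Fin d), matNorm2 (S x - S y) ≤ LS * ‖x - y‖) :
    0 ≤ LS := by
  have h1 := (matNorm2_nonneg _).trans (hLip (EuclideanSpace.single ⟨0, hd⟩ 1) 0)
  simpa using h1

/-- One step of the semi-implicit iteration contracts towards the inner stages of the base
Runge--Kutta method: if `h ‖A‖_∞ ‖Q‖₂ M^{(k)} < 1` then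
`max_i ‖Y_i^{(k+1)} − Y_i‖ ≤ h ‖A‖_∞ ‖Q‖₂ L_S C / (1 − h ‖A‖_∞ ‖Q‖₂ M^{(k)}) ·
max_i ‖Y_i^{(k)} − Y_i‖`. -/
theorem semiImplicit_iteration_single_step_contraction
    (d s : ℕ) (hd : 0 < d) (hs : 0 < s)
    (Q : Matrix (Fin d) (Fin d) ℝ) (hQ : Q.IsSymm)
    (A : Matrix (Fin s) (Fin s) ℝ)
    (S : EuclideanSpace ℝ (Fin d) → Matrix (Fin d) (Fin d) ℝ)
    (LS : ℝ) (hLip : ∀ x y : EuclideanSpace ℝ (Fin d), matNorm2 (S x - S y) ≤ LS * ‖x - y‖)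
    (h : ℝ) (hh : 0 < h) (y₀ : EuclideanSpace ℝ (Fin d))
    (Y Yk Yk1 : Fin s → EuclideanSpace ℝ (Fin d))
    (hY : ∀ i, Y i = y₀ + h • ∑ j, A i j • matVec (S (Y j)) (matVec Q (Y j)))
    (hYk1 : ∀ i, Yk1 i = y₀ + h • ∑ j, A i j • matVec (S (Yk j)) (matVec Q (Yk1 j)))
    (hsmall : h * rowSumNorm A * matNorm2 Q * (⨆ i, matNorm2 (S (Yk i))) < 1) :
    (⨆ i, ‖Yk1 i - Y i‖) ≤
      h * rowSumNorm A * matNorm2 Q * LS * (⨆ i, ‖Y i‖) /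
        (1 - h * rowSumNorm A * matNorm2 Q * (⨆ i, matNorm2 (S (Yk i)))) *
      (⨆ i, ‖Yk i - Y i‖) := by
  have hLS := lipschitz_const_nonneg hd hLip
  have : Nonempty (Fin s) := ⟨⟨0, hs⟩⟩
  have hle (f : Fin s → ℝ) (i : Fin s) : f i ≤ ⨆ i, f i :=
    le_ciSup (Set.finite_range f).bddAbove i
  have hM := hle fun i => matNorm2 (S (Yk i))
  have hC := hle fun i => ‖Y i‖
  have hD := hle fun i => ‖Yk1 i - Y i‖
  have hE := hle fun i => ‖Yk i - Y i‖
  have hM0 : 0 ≤ ⨆ i, matNorm2 (S (Yk i)) := Real.iSup_nonneg fun _ => matNorm2_nonneg _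
  have hC0 : 0 ≤ ⨆ i, ‖Y i‖ := Real.iSup_nonneg fun _ => norm_nonneg _
  have hD0 : 0 ≤ ⨆ i, ‖Yk1 i - Y i‖ := Real.iSup_nonneg fun _ => norm_nonneg _
  have hE0 : 0 ≤ ⨆ i, ‖Yk i - Y i‖ := Real.iSup_nonneg fun _ => norm_nonneg _
  have hDle : (⨆ i, ‖Yk1 i - Y i‖) ≤ h * (rowSumNorm A *
      ((⨆ i, matNorm2 (S (Yk i))) * (matNorm2 Q * ⨆ i, ‖Yk1 i - Y i‖) +
        LS * (⨆ i, ‖Yk i - Y i‖) * (matNorm2 Q * ⨆ i, ‖Y i‖))) := by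
    set M := ⨆ i, matNorm2 (S (Yk i))
    set C := ⨆ i, ‖Y i‖
    set D := ⨆ i, ‖Yk1 i - Y i‖
    set E := ⨆ i, ‖Yk i - Y i‖
    have hq := matNorm2_nonneg Q
    have hterm (j : Fin s) :
        ‖matVec (S (Yk j)) (matVec Q (Yk1 j)) - matVec (S (Y j)) (matVec Q (Y j))‖ ≤
          M * (matNorm2 Q * D) + LS * E * (matNorm2 Q * C) := by
      rw [matVec_comp_sub]
      refine (norm_add_le _ _).trans (add_le_add ?_ ?_)
      · refine (norm_matVec_le _ _).trans (mul_le_mul (hM j) ?_ (norm_nonneg _) hM0)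
        exact (norm_matVec_le _ _).trans (mul_le_mul_of_nonneg_left (hD j) hq)
      · refine (norm_matVec_le _ _).trans (mul_le_mul ?_ ?_ (norm_nonneg _) (by positivity))
        · exact (hLip _ _).trans (mul_le_mul_of_nonneg_left (hE j) hLS)
        · exact (norm_matVec_le _ _).trans (mul_le_mul_of_nonneg_left (hC j) hq)
    refine ciSup_le fun i => ?_
    have hdiff : Yk1 i - Y i = h • ∑ j, A i j •
        (matVec (S (Yk j)) (matVec Q (Yk1 j)) - matVec (S (Y j)) (matVec Q (Y j))) := by
      rw [hYk1 i, hY i]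
      simp only [smul_sub, Finset.sum_sub_distrib]
      abel
    rw [hdiff, norm_smul, Real.norm_of_nonneg hh.le]
    refine mul_le_mul_of_nonneg_left ?_ hh.le
    calc _ ≤ ∑ j, |A i j| * (M * (matNorm2 Q * D) + LS * E * (matNorm2 Q * C)) := by
          refine norm_sum_le_of_le _ fun j _ => ?_
          rw [norm_smul, Real.norm_eq_abs]
          exact mul_le_mul_of_nonneg_left (hterm j) (abs_nonneg _)
      _ ≤ _ := by
          rw [← Finset.sum_mul]
          exact mul_le_mul_of_nonneg_right (sum_abs_le_rowSumNorm A i) (by positivity)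
  -- Clearing the positive denominator absorbs the `D`-term of `hDle` into the left-hand side.
  rw [div_mul_eq_mul_div, le_div_iff₀ (sub_pos.mpr hsmall)]
  linarith
end

section
/- Let α, M, h be positive real numbers and L, C nonnegative real numbers. If h < ( α (L C + M) )^{-1}, then h α L C / (1 − h α M) < h α (L C + M). -/
open scoped RealInnerProductSpace
open Set MeasureTheory intervalIntegral Filter

/-- Comparison of the semi-implicit and explicit convergence rates: if
`h < (α (L C + M))⁻¹` then `h α L C / (1 − h α M) < h α (L C + M)`. -/
theorem semiImplicit_rate_lt_explicit_rate
    (α M h L C : ℝ) (hα : 0 < α) (hM : 0 < M) (hh : 0 < h)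
    (hL : 0 ≤ L) (hC : 0 ≤ C)
    (hsmall : h < (α * (L * C + M))⁻¹) :
    h * α * L * C / (1 - h * α * M) < h * α * (L * C + M) := by
  have hLC : 0 ≤ L * C := mul_nonneg hL hC
  have hb : 0 < h * α * M := by positivity
  have hS : 0 < α * (L * C + M) := by positivity
  have hlt : h * (α * (L * C + M)) < 1 := (lt_inv_mul_iff₀' hS).mp (by simpa using hsmall)
  have ha : 0 ≤ h * α * (L * C) := by positivity
  rw [div_lt_iff₀ (by linarith)]
  -- With `a = hαLC` and `b = hαM`, the claim is `(a + b)(1 - b) - a = b (1 - (a + b)) > 0`.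
  linarith [mul_pos hb (sub_pos.mpr hlt)]
end

section
/- Let d be a positive integer, Q ∈ ℝ^{d×d}, S : ℝ^d → ℝ^{d×d} Lipschitz continuous with constant L_S, and h > 0. Let y, w, u : [0, h] → ℝ^d be continuous functions with y(t) = y(0) + ∫₀ᵗ S(y(r)) Q y(r) dr and u(t) = y(0) + ∫₀ᵗ S(w(r)) Q u(r) dr for all t ∈ [0, h]. Set C_y = sup_{t∈[0,h]} ‖y(t)‖, M = sup_{t∈[0,h]} ‖S(w(t))‖₂, and suppose sup_{t∈[0,h]} ‖w(t) − y(t)‖ ≤ D and 2 h M ‖Q‖₂ ≤ 1. Then sup_{t∈[0,h]} ‖u(t) − y(t)‖ ≤ 2 L_S ‖Q‖₂ C_y D h. -/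
/-!
The error `e = u - y` satisfies `e(t) = ∫₀ᵗ (S(w) Q e + (S(w) - S(y)) Q y)`. If `E` is the maximum
of `‖e‖` over the compact interval `[0, h]`, the integrand is bounded by
`M ‖Q‖₂ E + L_S D ‖Q‖₂ C_y`, so `E ≤ h M ‖Q‖₂ E + L_S ‖Q‖₂ C_y D h`. As `h M ‖Q‖₂ ≤ 1 / 2`, the first
term is absorbed on the left-hand side; no Gronwall inequality is needed.
-/

open scoped RealInnerProductSpace
open Set MeasureTheory intervalIntegral Filter

/-- The matrix `M` as a continuous linear operator on Euclidean space; its operator norm is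
`matNorm2 M`. -/
noncomputable def matOp {d : ℕ} (M : Matrix (Fin d) (Fin d) ℝ) :
    EuclideanSpace ℝ (Fin d) →L[ℝ] EuclideanSpace ℝ (Fin d) :=
  LinearMap.toContinuousLinearMap (Matrix.toEuclideanLin M)

lemma matOp_sub {d : ℕ} (M N : Matrix (Fin d) (Fin d) ℝ) :
    matOp (M - N) = matOp M - matOp N := by
  simp [matOp]

/-- A function continuous on `[0, h]` is bounded there by its supremum over the subtype; this is
where boundedness, without which the real supremum would be the junk value `0`, is checked. -/
lemma le_iSup_Icc_of_continuousOn {h : ℝ} {f : ℝ → ℝ} (hf : ContinuousOn f (Set.Icc 0 h))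
    {t : ℝ} (ht : t ∈ Set.Icc (0:ℝ) h) : f t ≤ ⨆ s : Set.Icc (0:ℝ) h, f ↑s := by
  refine le_ciSup (f := fun s : Set.Icc (0:ℝ) h => f ↑s) ?_ ⟨t, ht⟩
  obtain ⟨B, hB⟩ := isCompact_Icc.bddAbove_image hf
  refine ⟨B, ?_⟩
  rintro _ ⟨s, rfl⟩
  exact hB ⟨s, s.2, rfl⟩

/-- One semi-implicit linearisation gains a factor of `h`: if `y` solves
`y(t) = y(0) + ∫₀ᵗ S(y) Q y`, `u` solves the linearised equation
`u(t) = y(0) + ∫₀ᵗ S(w) Q u`, `‖w − y‖ ≤ D` on `[0, h]`, and `2 h M ‖Q‖₂ ≤ 1`, then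
`‖u − y‖ ≤ 2 L_S ‖Q‖₂ C_y D h` on `[0, h]`. -/
theorem semiImplicit_linearisation_error_gain
    (d : ℕ) (hd : 0 < d)
    (Q : Matrix (Fin d) (Fin d) ℝ)
    (S : EuclideanSpace ℝ (Fin d) → Matrix (Fin d) (Fin d) ℝ)
    (LS : ℝ) (hLip : ∀ x y : EuclideanSpace ℝ (Fin d), matNorm2 (S x - S y) ≤ LS * ‖x - y‖)
    (h : ℝ) (hh : 0 < h)
    (y w u : ℝ → EuclideanSpace ℝ (Fin d))
    (hyc : ContinuousOn y (Set.Icc 0 h)) (hwc : ContinuousOn w (Set.Icc 0 h))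
    (huc : ContinuousOn u (Set.Icc 0 h))
    (hy : ∀ t ∈ Set.Icc (0:ℝ) h,
      y t = y 0 + ∫ r in (0:ℝ)..t, matVec (S (y r)) (matVec Q (y r)))
    (hu : ∀ t ∈ Set.Icc (0:ℝ) h,
      u t = y 0 + ∫ r in (0:ℝ)..t, matVec (S (w r)) (matVec Q (u r)))
    (D : ℝ) (hD : ∀ t ∈ Set.Icc (0:ℝ) h, ‖w t - y t‖ ≤ D)
    (hM : 2 * h * (⨆ t : Set.Icc (0:ℝ) h, matNorm2 (S (w ↑t))) * matNorm2 Q ≤ 1) :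
    ∀ t ∈ Set.Icc (0:ℝ) h,
      ‖u t - y t‖ ≤ 2 * LS * matNorm2 Q * (⨆ t : Set.Icc (0:ℝ) h, ‖y ↑t‖) * D * h := by
  have hS : ∀ a b, ‖matOp (S a) - matOp (S b)‖ ≤ LS * ‖a - b‖ := fun a b => by
    rw [← matOp_sub]; exact hLip a b
  -- As `d > 0` there are two distinct points, which forces the Lipschitz constant to be
  -- nonnegative.
  have hLS : 0 ≤ LS := by
    have : Nonempty (Fin d) := ⟨⟨0, hd⟩⟩
    obtain ⟨a, ha⟩ := exists_ne (0 : EuclideanSpace ℝ (Fin d))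
    have h1 := (norm_nonneg _).trans (hS a 0)
    rw [sub_zero] at h1
    exact nonneg_of_mul_nonneg_left h1 (norm_pos_iff.2 ha)
  have hSc : Continuous fun a => matOp (S a) :=
    (LipschitzWith.of_dist_le_mul (K := ⟨LS, hLS⟩) fun a b => by
      rw [dist_eq_norm, dist_eq_norm]; exact hS a b).continuous
  have hAy : ContinuousOn (fun r => matOp (S (y r)) (matOp Q (y r))) (Set.Icc 0 h) :=
    (hSc.comp_continuousOn hyc).clm_apply ((matOp Q).continuous.comp_continuousOn hyc)
  have hAu : ContinuousOn (fun r => matOp (S (w r)) (matOp Q (u r))) (Set.Icc 0 h) :=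
    (hSc.comp_continuousOn hwc).clm_apply ((matOp Q).continuous.comp_continuousOn huc)
  have hCle : ∀ t ∈ Set.Icc (0:ℝ) h, ‖y t‖ ≤ ⨆ t : Set.Icc (0:ℝ) h, ‖y ↑t‖ :=
    fun t ht => le_iSup_Icc_of_continuousOn hyc.norm ht
  have hMle : ∀ t ∈ Set.Icc (0:ℝ) h,
      ‖matOp (S (w t))‖ ≤ ⨆ t : Set.Icc (0:ℝ) h, matNorm2 (S (w ↑t)) :=
    fun t ht => le_iSup_Icc_of_continuousOn (f := fun t => ‖matOp (S (w t))‖)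
      (hSc.comp_continuousOn hwc).norm ht
  have hq : matNorm2 Q = ‖matOp Q‖ := rfl
  rw [hq] at hM ⊢
  generalize (⨆ t : Set.Icc (0:ℝ) h, ‖y ↑t‖) = C at hCle ⊢
  generalize (⨆ t : Set.Icc (0:ℝ) h, matNorm2 (S (w ↑t))) = M at hMle hM
  have h0 : (0:ℝ) ∈ Set.Icc (0:ℝ) h := ⟨le_rfl, hh.le⟩
  have hC0 : 0 ≤ C := (norm_nonneg _).trans (hCle 0 h0)
  have hM0 : 0 ≤ M := (norm_nonneg _).trans (hMle 0 h0)
  have hD0 : 0 ≤ D := (norm_nonneg _).trans (hD 0 h0)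
  have hq0 : 0 ≤ ‖matOp Q‖ := norm_nonneg _
  obtain ⟨T, hT, hmax⟩ := isCompact_Icc.exists_isMaxOn ⟨0, h0⟩ (huc.sub hyc).norm
  have hE : ∀ t ∈ Set.Icc (0:ℝ) h, ‖u t - y t‖ ≤ ‖u T - y T‖ := fun t ht => hmax ht
  have hpt : ∀ r ∈ Set.Icc (0:ℝ) h,
      ‖matOp (S (w r)) (matOp Q (u r)) - matOp (S (y r)) (matOp Q (y r))‖
        ≤ M * (‖matOp Q‖ * ‖u T - y T‖) + LS * D * (‖matOp Q‖ * C) := fun r hr => by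
    have key : matOp (S (w r)) (matOp Q (u r)) - matOp (S (y r)) (matOp Q (y r))
        = matOp (S (w r)) (matOp Q (u r - y r))
          + (matOp (S (w r)) - matOp (S (y r))) (matOp Q (y r)) := by
      simp only [map_sub, sub_apply]; abel
    rw [key]
    refine (norm_add_le _ _).trans (add_le_add ?_ ?_)
    · refine (ContinuousLinearMap.le_opNorm _ _).trans
        (mul_le_mul (hMle r hr) ?_ (norm_nonneg _) hM0)
      exact (ContinuousLinearMap.le_opNorm _ _).trans
        (mul_le_mul_of_nonneg_left (hE r hr) hq0)
    · refine (ContinuousLinearMap.le_opNorm _ _).trans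
        (mul_le_mul ?_ ?_ (norm_nonneg _) (mul_nonneg hLS hD0))
      · exact (hS _ _).trans (mul_le_mul_of_nonneg_left (hD r hr) hLS)
      · exact (ContinuousLinearMap.le_opNorm _ _).trans
          (mul_le_mul_of_nonneg_left (hCle r hr) hq0)
  have hsub : Set.uIcc 0 T ⊆ Set.Icc 0 h := by
    rw [Set.uIcc_of_le hT.1]; exact Set.Icc_subset_Icc_right hT.2
  have heq : u T - y T = ∫ r in (0:ℝ)..T,
      (matOp (S (w r)) (matOp Q (u r)) - matOp (S (y r)) (matOp Q (y r))) := by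
    rw [intervalIntegral.integral_sub (hAu.mono hsub).intervalIntegrable
      (hAy.mono hsub).intervalIntegrable, hu T hT, hy T hT]
    exact add_sub_add_left_eq_sub _ _ _
  have hfin : ‖u T - y T‖
      ≤ (M * (‖matOp Q‖ * ‖u T - y T‖) + LS * D * (‖matOp Q‖ * C)) * h := by
    have hB : 0 ≤ M * (‖matOp Q‖ * ‖u T - y T‖) + LS * D * (‖matOp Q‖ * C) := by positivity
    calc ‖u T - y T‖ = _ := congrArg norm heq
      _ ≤ (M * (‖matOp Q‖ * ‖u T - y T‖) + LS * D * (‖matOp Q‖ * C)) * |T - 0| :=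
        intervalIntegral.norm_integral_le_of_norm_le_const fun r hr =>
          hpt r (hsub (Set.uIoc_subset_uIcc hr))
      _ ≤ _ := by
        rw [sub_zero, abs_of_nonneg hT.1]
        exact mul_le_mul_of_nonneg_left hT.2 hB
  intro t ht
  refine (hE t ht).trans ?_
  -- Absorption: `2 E ≤ (2 h M ‖Q‖₂) E + 2 L_S ‖Q‖₂ C D h` with `2 h M ‖Q‖₂ ≤ 1`.
  nlinarith [mul_le_mul_of_nonneg_right hM (norm_nonneg (u T - y T))]
end

section
/- Let h > 0 and let z, w, u : [0, h] → ℝ² be continuous functions such that z(t) = z(0) + t v₀ + ∫₀ᵗ ∫₀^τ (−z(σ)/‖z(σ)‖³) dσ dτ and u(t) = z(0) + t v₀ + ∫₀ᵗ ∫₀^τ (−u(σ)/‖w(σ)‖³) dσ dτ for all t ∈ [0, h], for some v₀ ∈ ℝ². Suppose there are positive constants R̲, R̄, R̲_w, R̄_w with R̲ ≤ ‖z(t)‖ ≤ R̄ and R̲_w ≤ ‖w(t)‖ ≤ R̄_w for all t ∈ [0, h], that sup_{t∈[0,h]} ‖w(t) − z(t)‖ ≤ D, and that 2 h² ≤ R̲_w³.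 Then sup_{t∈[0,h]} ‖u(t) − z(t)‖ ≤ 2 h² R̄ (R̄_w² + R̄_w R̄ + R̄²) / (R̲_w R̲)³ · D. -/
/-!
Put `e = u - z` and let `E` be the maximum of `‖e‖` on `[0, h]`. Subtracting the two integral
equations cancels the initial data and leaves the double integral of
`-u/‖w‖³ + z/‖z‖³ = -(u - z)/‖w‖³ + (1/‖z‖³ - 1/‖w‖³) z`.
The first term is at most `E / R̲_w³`; factoring `‖w‖³ - ‖z‖³` bounds the second by
`R̄ (R̄_w² + R̄_w R̄ + R̄²) / (R̲_w R̲)³ · D` (`kepler_force_sub_le`). A double integral over `[0, h]`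
gains a factor `h²` (`norm_double_integral_sub_le`), and since `h² / R̲_w³ ≤ 1/2` the term in `E`
is absorbed into the left-hand side at the point where the maximum is attained.
-/

open scoped RealInnerProductSpace
open Set MeasureTheory intervalIntegral Filter

/-- Each integration costs a factor at most `h`; the sharper constant `C * h ^ 2 / 2` is not
needed. Continuity supplies the integrability that linearity of both integrals requires. -/
lemma norm_double_integral_sub_le {V : Type*} [NormedAddCommGroup V] [NormedSpace ℝ V]
    {h C : ℝ} {f g : ℝ → V}
    (hf : ContinuousOn f (Set.Icc 0 h)) (hg : ContinuousOn g (Set.Icc 0 h))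
    (hC : ∀ σ ∈ Set.Icc (0:ℝ) h, ‖f σ - g σ‖ ≤ C) {t : ℝ} (ht : t ∈ Set.Icc (0:ℝ) h) :
    ‖(∫ τ in (0:ℝ)..t, ∫ σ in (0:ℝ)..τ, f σ) - ∫ τ in (0:ℝ)..t, ∫ σ in (0:ℝ)..τ, g σ‖
      ≤ C * h ^ 2 := by
  have h0 : (0:ℝ) ≤ h := ht.1.trans ht.2
  have hC0 : 0 ≤ C := (norm_nonneg _).trans (hC t ht)
  have sub : ∀ τ ∈ Set.Icc (0:ℝ) h, Set.uIcc 0 τ ⊆ Set.Icc 0 h := fun τ hτ => by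
    rw [Set.uIcc_of_le hτ.1]; exact Set.Icc_subset_Icc_right hτ.2
  have integrable : ∀ {k : ℝ → V}, ContinuousOn k (Set.Icc 0 h) → ∀ τ ∈ Set.Icc (0:ℝ) h,
      IntervalIntegrable k volume 0 τ :=
    fun hk τ hτ => (hk.mono (sub τ hτ)).intervalIntegrable
  have prim : ∀ {k : ℝ → V}, ContinuousOn k (Set.Icc 0 h) →
      ContinuousOn (fun τ => ∫ σ in (0:ℝ)..τ, k σ) (Set.Icc 0 h) := fun {k} hk => by
    have := intervalIntegral.continuousOn_primitive_interval
      (μ := volume) (f := k) (a := 0) (b := h)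
      (by rw [Set.uIcc_of_le h0]; exact hk.integrableOn_Icc)
    rwa [Set.uIcc_of_le h0] at this
  rw [← intervalIntegral.integral_sub (integrable (prim hf) t ht) (integrable (prim hg) t ht)]
  have inner_le : ∀ τ ∈ Set.Icc (0:ℝ) h,
      ‖(∫ σ in (0:ℝ)..τ, f σ) - ∫ σ in (0:ℝ)..τ, g σ‖ ≤ C * h := fun τ hτ => by
    rw [← intervalIntegral.integral_sub (integrable hf τ hτ) (integrable hg τ hτ)]
    refine (intervalIntegral.norm_integral_le_of_norm_le_const (C := C) fun σ hσ =>
      hC σ (sub τ hτ (Set.uIoc_subset_uIcc hσ))).trans ?_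
    rw [sub_zero, abs_of_nonneg hτ.1]
    exact mul_le_mul_of_nonneg_left hτ.2 hC0
  refine (intervalIntegral.norm_integral_le_of_norm_le_const (C := C * h) fun τ hτ =>
    inner_le τ (sub t ht (Set.uIoc_subset_uIcc hτ))).trans ?_
  rw [sub_zero, abs_of_nonneg ht.1, pow_two, ← mul_assoc]
  exact mul_le_mul_of_nonneg_left ht.2 (mul_nonneg hC0 h0)

/-- Factoring `a³ - b³` gives the Lipschitz estimate for the scalar `r ↦ r⁻³`. -/
lemma abs_inv_cube_sub_le {a b l L m M D : ℝ} (hl : 0 < l) (hm : 0 < m)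
    (ha : l ≤ a) (haL : a ≤ L) (hb : m ≤ b) (hbM : b ≤ M) (hD : |a - b| ≤ D) :
    |(b ^ 3)⁻¹ - (a ^ 3)⁻¹| ≤ (L ^ 2 + L * M + M ^ 2) / (l * m) ^ 3 * D := by
  have ha0 : 0 < a := hl.trans_le ha
  have hb0 : 0 < b := hm.trans_le hb
  have hL0 : 0 < L := ha0.trans_le haL
  have hM0 : 0 < M := hb0.trans_le hbM
  have key : (b ^ 3)⁻¹ - (a ^ 3)⁻¹ = (a ^ 2 + a * b + b ^ 2) / (a * b) ^ 3 * (a - b) := by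
    field_simp
    ring
  rw [key, abs_mul, abs_of_pos (by positivity)]
  gcongr

lemma kepler_force_sub_le {V : Type*} [NormedAddCommGroup V] [NormedSpace ℝ V]
    {z w u : V} {Rl Ru Rlw Ruw D E : ℝ} (hRl : 0 < Rl) (hRlw : 0 < Rlw)
    (hz : Rl ≤ ‖z‖) (hz' : ‖z‖ ≤ Ru) (hw : Rlw ≤ ‖w‖) (hw' : ‖w‖ ≤ Ruw)
    (hD : ‖w - z‖ ≤ D) (hE : ‖u - z‖ ≤ E) :
    ‖(-(‖w‖ ^ 3)⁻¹) • u - (-(‖z‖ ^ 3)⁻¹) • z‖ ≤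
      (Rlw ^ 3)⁻¹ * E + (Ruw ^ 2 + Ruw * Ru + Ru ^ 2) / (Rlw * Rl) ^ 3 * D * Ru := by
  have split : (-(‖w‖ ^ 3)⁻¹) • u - (-(‖z‖ ^ 3)⁻¹) • z =
      (-(‖w‖ ^ 3)⁻¹) • (u - z) + ((‖z‖ ^ 3)⁻¹ - (‖w‖ ^ 3)⁻¹) • z := by
    module
  have hs := abs_inv_cube_sub_le hRlw hRl hw hw' hz hz' ((abs_norm_sub_norm_le w z).trans hD)
  have hs0 := (abs_nonneg _).trans hs
  rw [split]
  refine (norm_add_le _ _).trans (add_le_add ?_ ?_)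
  · rw [norm_smul, norm_neg, Real.norm_of_nonneg (by positivity)]
    gcongr
  · rw [norm_smul, Real.norm_eq_abs]
    exact mul_le_mul hs hz' (norm_nonneg _) hs0

/-- Single-linearisation position-error estimate for the Kepler problem: if `z` solves
`z̈ = −z/‖z‖³` and `u` the linearised `ü = −u/‖w‖³` (integrated form, common initial data),
with `R̲ ≤ ‖z‖ ≤ R̄`, `R̲_w ≤ ‖w‖ ≤ R̄_w`, `‖w − z‖ ≤ D` and `2h² ≤ R̲_w³`, then
`‖u − z‖ ≤ 2h² R̄ (R̄_w² + R̄_w R̄ + R̄²)/(R̲_w R̲)³ · D` on `[0, h]`. -/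
theorem kepler_semiImplicit_linearisation_error
    (h : ℝ) (hh : 0 < h)
    (z w u : ℝ → EuclideanSpace ℝ (Fin 2))
    (v₀ : EuclideanSpace ℝ (Fin 2))
    (hzc : ContinuousOn z (Set.Icc 0 h)) (hwc : ContinuousOn w (Set.Icc 0 h))
    (huc : ContinuousOn u (Set.Icc 0 h))
    (hz : ∀ t ∈ Set.Icc (0:ℝ) h,
      z t = z 0 + t • v₀ +
        ∫ τ in (0:ℝ)..t, ∫ σ in (0:ℝ)..τ, (-(‖z σ‖ ^ 3)⁻¹) • z σ)
    (hu : ∀ t ∈ Set.Icc (0:ℝ) h,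
      u t = z 0 + t • v₀ +
        ∫ τ in (0:ℝ)..t, ∫ σ in (0:ℝ)..τ, (-(‖w σ‖ ^ 3)⁻¹) • u σ)
    (Rl Ru Rlw Ruw D : ℝ)
    (hRl : 0 < Rl) (hRu : 0 < Ru) (hRlw : 0 < Rlw) (hRuw : 0 < Ruw)
    (hzB : ∀ t ∈ Set.Icc (0:ℝ) h, Rl ≤ ‖z t‖ ∧ ‖z t‖ ≤ Ru)
    (hwB : ∀ t ∈ Set.Icc (0:ℝ) h, Rlw ≤ ‖w t‖ ∧ ‖w t‖ ≤ Ruw)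
    (hD : ∀ t ∈ Set.Icc (0:ℝ) h, ‖w t - z t‖ ≤ D)
    (hsmall : 2 * h ^ 2 ≤ Rlw ^ 3) :
    ∀ t ∈ Set.Icc (0:ℝ) h,
      ‖u t - z t‖ ≤ 2 * h ^ 2 * Ru * (Ruw ^ 2 + Ruw * Ru + Ru ^ 2) / (Rlw * Rl) ^ 3 * D := by
  have force_cont : ∀ {p q : ℝ → EuclideanSpace ℝ (Fin 2)} {r : ℝ}, 0 < r →
      ContinuousOn p (Set.Icc 0 h) → ContinuousOn q (Set.Icc 0 h) →
      (∀ t ∈ Set.Icc (0:ℝ) h, r ≤ ‖p t‖) →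
      ContinuousOn (fun σ => (-(‖p σ‖ ^ 3)⁻¹) • q σ) (Set.Icc 0 h) := fun hr hp hq hpr =>
    (((hp.norm.pow 3).inv₀ fun t ht => pow_ne_zero 3 (hr.trans_le (hpr t ht)).ne').neg).smul hq
  obtain ⟨s, hs, hmax⟩ := isCompact_Icc.exists_isMaxOn (Set.nonempty_Icc.2 hh.le)
    (huc.sub hzc).norm
  have hE : ∀ t ∈ Set.Icc (0:ℝ) h, ‖u t - z t‖ ≤ ‖u s - z s‖ := fun t ht => hmax ht
  have bound := norm_double_integral_sub_le
    (force_cont hRlw hwc huc fun t ht => (hwB t ht).1)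
    (force_cont hRl hzc hzc fun t ht => (hzB t ht).1)
    (fun σ hσ => kepler_force_sub_le hRl hRlw (hzB σ hσ).1 (hzB σ hσ).2
      (hwB σ hσ).1 (hwB σ hσ).2 (hD σ hσ) (hE σ hσ)) hs
  -- Adding the common affine part to both double integrals turns them back into `u s` and `z s`.
  rw [← add_sub_add_left_eq_sub _ _ (z 0 + s • v₀), ← hu s hs, ← hz s hs] at bound
  have half : (Rlw ^ 3)⁻¹ * h ^ 2 ≤ 1 / 2 := by
    rw [inv_mul_le_iff₀ (by positivity)]
    linarith
  have absorb := mul_le_mul_of_nonneg_right half (norm_nonneg (u s - z s))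
  intro t ht
  calc ‖u t - z t‖ ≤ ‖u s - z s‖ := hE t ht
    _ ≤ 2 * h ^ 2 * ((Ruw ^ 2 + Ruw * Ru + Ru ^ 2) / (Rlw * Rl) ^ 3 * D * Ru) := by
      linarith
    _ = _ := by ring
end

section
/- Let h > 0 and let z, w, u : [0, h] → ℝ² be twice differentiable functions with z̈(t) = −z(t)/‖z(t)‖³, ü(t) = −u(t)/‖w(t)‖³ for all t ∈ [0, h], u(0) = z(0), and u̇(0) = ż(0). Suppose there are positive constants R̲, R̄, R̲_w with R̲ ≤ ‖z(t)‖ ≤ R̄ and R̲_w ≤ ‖w(t)‖ for all t ∈ [0, h], that sup_{t∈[0,h]} ‖w(t) − z(t)‖ ≤ D, that ‖w(t)‖ ≤ R̄_w for all t for some R̄_w > 0, and that sup_{t∈[0,h]} ‖u(t) − z(t)‖ ≤ E. Then for all t ∈ [0, h], ‖u̇(t) − ż(t)‖ ≤ h ( E / R̲_w³ + R̄ (R̄_w² + R̄_w R̄ + R̄²) / (R̲_w³ R̲³) · D ). -/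
/-!
Subtracting the two equations gives
`ü - z̈ = -‖w‖⁻³ (u - z) - (‖w‖⁻³ - ‖z‖⁻³) z`.
The first term is at most `E / R̲_w³`. For the second, `a³ - b³ = (a - b)(a² + ab + b²)` with
`a = ‖w‖`, `b = ‖z‖`, and `|‖w‖ - ‖z‖| ≤ ‖w - z‖ ≤ D` (`abs_inv_cube_sub_inv_cube_le`).
Since `u̇ - ż` vanishes at `0`, the mean value inequality on `[0, h]` turns this bound on its
derivative into the claim.
-/

open scoped RealInnerProductSpace
open Set MeasureTheory intervalIntegral Filter

/-- Lipschitz estimate for `r ↦ r⁻³`, with separate ranges `[la, A]` and `[lb, B]` for the two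
points since `‖w‖` and `‖z‖` obey different bounds. -/
lemma abs_inv_cube_sub_inv_cube_le {a b A B la lb D : ℝ} (hla : 0 < la) (hlb : 0 < lb)
    (ha : la ≤ a) (hb : lb ≤ b) (haA : a ≤ A) (hbB : b ≤ B) (hab : |a - b| ≤ D) :
    |(a ^ 3)⁻¹ - (b ^ 3)⁻¹| ≤ (A ^ 2 + A * B + B ^ 2) / (la ^ 3 * lb ^ 3) * D := by
  have ha0 : 0 < a := hla.trans_le ha
  have hb0 : 0 < b := hlb.trans_le hb
  have hA0 : 0 < A := ha0.trans_le haA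
  have hB0 : 0 < B := hb0.trans_le hbB
  have hD0 : 0 ≤ D := (abs_nonneg _).trans hab
  have key : (a ^ 3)⁻¹ - (b ^ 3)⁻¹ =
      -((a ^ 2 + a * b + b ^ 2) / (a ^ 3 * b ^ 3) * (a - b)) := by
    field_simp
    ring
  rw [key, abs_neg, abs_mul, abs_of_pos (by positivity)]
  gcongr

/-- Velocity-error estimate for the semi-implicitly linearised Kepler equation: under the
position-error bounds `‖w − z‖ ≤ D` and `‖u − z‖ ≤ E`, the velocities satisfy
`‖u̇ − ż‖ ≤ h (E/R̲_w³ + R̄ (R̄_w² + R̄_w R̄ + R̄²)/(R̲_w³ R̲³) D)` on `[0, h]`. -/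
theorem kepler_semiImplicit_velocity_error
    (h : ℝ) (hh : 0 < h)
    (z w u z' u' : ℝ → EuclideanSpace ℝ (Fin 2))
    (hdz : ∀ t ∈ Set.Icc (0:ℝ) h, HasDerivWithinAt z (z' t) (Set.Icc 0 h) t)
    (hddz : ∀ t ∈ Set.Icc (0:ℝ) h,
      HasDerivWithinAt z' ((-(‖z t‖ ^ 3)⁻¹) • z t) (Set.Icc 0 h) t)
    (hdu : ∀ t ∈ Set.Icc (0:ℝ) h, HasDerivWithinAt u (u' t) (Set.Icc 0 h) t)
    (hddu : ∀ t ∈ Set.Icc (0:ℝ) h,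
      HasDerivWithinAt u' ((-(‖w t‖ ^ 3)⁻¹) • u t) (Set.Icc 0 h) t)
    (h0 : u 0 = z 0) (h0' : u' 0 = z' 0)
    (Rl Ru Rlw Ruw D E : ℝ)
    (hRl : 0 < Rl) (hRu : 0 < Ru) (hRlw : 0 < Rlw) (hRuw : 0 < Ruw)
    (hzB : ∀ t ∈ Set.Icc (0:ℝ) h, Rl ≤ ‖z t‖ ∧ ‖z t‖ ≤ Ru)
    (hwl : ∀ t ∈ Set.Icc (0:ℝ) h, Rlw ≤ ‖w t‖)
    (hwu : ∀ t ∈ Set.Icc (0:ℝ) h, ‖w t‖ ≤ Ruw)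
    (hD : ∀ t ∈ Set.Icc (0:ℝ) h, ‖w t - z t‖ ≤ D)
    (hE : ∀ t ∈ Set.Icc (0:ℝ) h, ‖u t - z t‖ ≤ E) :
    ∀ t ∈ Set.Icc (0:ℝ) h,
      ‖u' t - z' t‖ ≤
        h * (E / Rlw ^ 3 + Ru * (Ruw ^ 2 + Ruw * Ru + Ru ^ 2) / (Rlw ^ 3 * Rl ^ 3) * D) := by
  set C := E / Rlw ^ 3 + Ru * (Ruw ^ 2 + Ruw * Ru + Ru ^ 2) / (Rlw ^ 3 * Rl ^ 3) * D with hC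
  have hder : ∀ t ∈ Set.Icc (0:ℝ) h, HasDerivWithinAt (fun s => u' s - z' s)
      ((-(‖w t‖ ^ 3)⁻¹) • u t - (-(‖z t‖ ^ 3)⁻¹) • z t) (Set.Icc 0 h) t :=
    fun t ht => (hddu t ht).sub (hddz t ht)
  have hbound : ∀ t ∈ Set.Icc (0:ℝ) h,
      ‖(-(‖w t‖ ^ 3)⁻¹) • u t - (-(‖z t‖ ^ 3)⁻¹) • z t‖ ≤ C := by
    intro t ht
    have hsplit : (-(‖w t‖ ^ 3)⁻¹) • u t - (-(‖z t‖ ^ 3)⁻¹) • z t =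
        -((‖w t‖ ^ 3)⁻¹ • (u t - z t) + ((‖w t‖ ^ 3)⁻¹ - (‖z t‖ ^ 3)⁻¹) • z t) := by
      module
    have hE0 : 0 ≤ E := (norm_nonneg _).trans (hE t ht)
    have hD0 : 0 ≤ D := (norm_nonneg _).trans (hD t ht)
    have h1 : ‖(‖w t‖ ^ 3)⁻¹ • (u t - z t)‖ ≤ (Rlw ^ 3)⁻¹ * E := by
      rw [norm_smul, Real.norm_of_nonneg (by positivity)]
      have := hwl t ht
      have := hE t ht
      gcongr
    have h2 : ‖((‖w t‖ ^ 3)⁻¹ - (‖z t‖ ^ 3)⁻¹) • z t‖ ≤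
        (Ruw ^ 2 + Ruw * Ru + Ru ^ 2) / (Rlw ^ 3 * Rl ^ 3) * D * Ru := by
      rw [norm_smul, Real.norm_eq_abs]
      exact mul_le_mul
        (abs_inv_cube_sub_inv_cube_le hRlw hRl (hwl t ht) (hzB t ht).1 (hwu t ht) (hzB t ht).2
          ((abs_norm_sub_norm_le _ _).trans (hD t ht)))
        (hzB t ht).2 (norm_nonneg _) (by positivity)
    rw [hsplit, norm_neg]
    refine (norm_add_le_of_le h1 h2).trans_eq ?_
    rw [hC]
    ring
  intro t ht
  have h0mem : (0:ℝ) ∈ Set.Icc (0:ℝ) h := ⟨le_rfl, hh.le⟩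
  have hC0 : 0 ≤ C := (norm_nonneg _).trans (hbound 0 h0mem)
  have hmv := (convex_Icc (0:ℝ) h).norm_image_sub_le_of_norm_hasDerivWithin_le hder hbound h0mem ht
  simp only [h0', sub_self, sub_zero, Real.norm_of_nonneg ht.1] at hmv
  calc ‖u' t - z' t‖ ≤ C * t := hmv
    _ ≤ C * h := mul_le_mul_of_nonneg_left ht.2 hC0
    _ = h * C := mul_comm _ _
end
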